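/- Let Λ be a classical positive definite quadratic ℤ-lattice of rank r. Then the number of vectors of norm 2 satisfies N(2) ≤ max{480, 2r(r−1)}. -/

import Mathlib

/-!
Let `d` be the largest number of roots `w` with `⟨v, w⟩ = 1` for a fixed root `v` (a vector of norm
`2`), and let `N` be the number of roots. The frame inequality
`(∑ ‖w‖²)² ≤ r ∑∑ ⟨v, w⟩²`, which is Cauchy–Schwarz for the trace of the Gram operator, together
with `∑_w ⟨v, w⟩² ≤ 8 + 2 d` gives `2 N ≤ r (4 + d)`. So it suffices that `d ≤ max 56 (4 r - 8)`.

The neighbors of `v` come in pairs `x`, `v - x`, and the vectors `2 x - v` span equiangular lines at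
angle `arccos (1 / 3)`, for which this is the bound of Lemmens and Seidel. In their argument, four
orthogonal neighbors of `v` add up to `2 v`, so every neighbor outside their four pairs is
orthogonal to exactly two of them. This sorts the remaining neighbors into six pillars. After
projecting away the four base vectors, half of a pillar is an orthogonal system, whose size is at
most `r - 4`, and Bessel's inequality cuts it down to `4` if a pillar over a crossing pair is
nonempty. So either all pillars have at most `8` elements, or only two opposite pillars are
nonempty.
If there are no four orthogonal neighbors, there are not even three, and one vector from each pair
can be chosen so that all mutual products are `1`; such vectors are linearly independent.
-/

open scoped Finset

/-- A symmetric bilinear form that is positive on nonzero vectors. For `R = ℤ` this is the form `𝔅`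
of a classical positive definite lattice. -/
structure IsPosDefSymm {R M : Type*} [CommRing R] [LT R] [AddCommGroup M] [Module R M]
    (B : LinearMap.BilinForm R M) : Prop where
  symm : ∀ x y, B x y = B y x
  pos : ∀ x, x ≠ 0 → 0 < B x x

section LinearIndependence

variable {R M ι : Type*} [CommRing R] [AddCommGroup M] [Module R M]
  {B : LinearMap.BilinForm R M} {f : ι → M}

theorem linearIndependent_of_isOrthoᵢ [NoZeroDivisors R] (hf : B.IsOrthoᵢ f)
    (hne : ∀ i, B (f i) (f i) ≠ 0) : LinearIndependent R f := by
  rw [linearIndependent_iff']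
  intro s g hg i hi
  have hgi : g i * B (f i) (f i) = 0 := by
    calc g i * B (f i) (f i) = ∑ j ∈ s, g j * B (f i) (f j) :=
          (Finset.sum_eq_single_of_mem (f := fun j ↦ g j * B (f i) (f j)) i hi
            fun j _ hj ↦ by rw [hf hj.symm, mul_zero]).symm
      _ = B (f i) (∑ j ∈ s, g j • f j) := by simp only [map_sum, map_smul, smul_eq_mul]
      _ = 0 := by rw [hg, map_zero]
  exact (mul_eq_zero.mp hgi).resolve_right (hne i)

theorem card_le_finrank_of_isOrthoᵢ [IsDomain R] [Module.Finite R M] [Fintype ι]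
    (hf : B.IsOrthoᵢ f) (hne : ∀ i, B (f i) (f i) ≠ 0) :
    Fintype.card ι ≤ Module.finrank R M :=
  (linearIndependent_of_isOrthoᵢ hf hne).fintype_card_le_finrank

theorem linearIndependent_of_apply_eq_one [LinearOrder R] [IsStrictOrderedRing R]
    (hself : ∀ i, B (f i) (f i) = 2) (hne : ∀ i j, i ≠ j → B (f i) (f j) = 1) :
    LinearIndependent R f := by
  classical
  rw [linearIndependent_iff']
  intro s g hg
  have hgram (i j) : B (f i) (f j) = 1 + if i = j then 1 else 0 := by
    split_ifs with h
    · rw [h, hself, one_add_one_eq_two]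
    · rw [hne i j h, add_zero]
  have hnorm : (∑ i ∈ s, g i) ^ 2 + ∑ i ∈ s, g i ^ 2 = 0 := by
    calc (∑ i ∈ s, g i) ^ 2 + ∑ i ∈ s, g i ^ 2
        = ∑ i ∈ s, ∑ j ∈ s, g i * (g j * B (f i) (f j)) := by
          rw [sq, Finset.sum_mul_sum, ← Finset.sum_add_distrib]
          refine Finset.sum_congr rfl fun i hi ↦ ?_
          simp only [hgram, mul_add, mul_one, mul_ite, mul_zero, Finset.sum_add_distrib,
            Finset.sum_ite_eq, hi, if_true, sq]
      _ = B (∑ i ∈ s, g i • f i) (∑ j ∈ s, g j • f j) := by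
          simp only [map_sum, map_smul, LinearMap.sum_apply, LinearMap.smul_apply, smul_eq_mul,
            Finset.mul_sum]
          rw [Finset.sum_comm]
          exact Finset.sum_congr rfl fun i _ ↦ Finset.sum_congr rfl fun j _ ↦ mul_left_comm ..
      _ = 0 := by rw [hg, map_zero]
  have hsq : ∑ i ∈ s, g i ^ 2 = 0 :=
    le_antisymm (by linarith [sq_nonneg (∑ i ∈ s, g i)])
      (Finset.sum_nonneg fun i _ ↦ sq_nonneg (g i))
  exact fun i hi ↦ pow_eq_zero_iff two_ne_zero |>.mp <|
    (Finset.sum_eq_zero_iff_of_nonneg fun i _ ↦ sq_nonneg (g i)).mp hsq i hi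

end LinearIndependence

theorem exists_finset_pairwise_of_finite {α : Type*} {C : Set α} (hC : C.Finite)
    {r : α → α → Prop} [Std.Symm r] (σ : α → α)
    (h : ∀ x ∈ C, ∀ y ∈ C, x ≠ y → x ≠ σ y → r x y) :
    ∃ D : Finset α, ↑D ⊆ C ∧ (D : Set α).Pairwise r ∧ C.ncard ≤ 2 * #D := by
  classical
  lift C to Finset α using hC
  let P : Finset (Finset α) := {D ∈ C.powerset | (D : Set α).Pairwise r}
  have mem_P {D} : D ∈ P ↔ D ⊆ C ∧ (D : Set α).Pairwise r := by
    rw [Finset.mem_filter, Finset.mem_powerset]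
  obtain ⟨D, hD⟩ := P.exists_maximal ⟨∅, by simp [mem_P]⟩
  obtain ⟨hDC, hpair⟩ := mem_P.mp hD.prop
  have hcover : C ⊆ D ∪ D.image σ := by
    intro x hx
    by_contra hxD
    simp only [Finset.mem_union, Finset.mem_image, not_or, not_exists, not_and] at hxD
    have hrx (y) (hy : y ∈ D) : r x y :=
      h x hx y (hDC hy) (fun e ↦ hxD.1 (e ▸ hy)) (fun e ↦ hxD.2 y hy e.symm)
    have hins : insert x D ∈ P := by
      rw [mem_P, Finset.coe_insert]
      exact ⟨Finset.insert_subset hx hDC, hpair.insert_of_symm fun y hy _ ↦ hrx y hy⟩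
    exact hxD.1 (hD.le_of_ge hins (Finset.subset_insert x D) (Finset.mem_insert_self x D))
  refine ⟨D, hDC, hpair, ?_⟩
  calc (C : Set α).ncard = #C := Set.ncard_coe_finset C
    _ ≤ #D + #(D.image σ) := (Finset.card_le_card hcover).trans (Finset.card_union_le _ _)
    _ ≤ 2 * #D := by linarith [Finset.card_image_le (s := D) (f := σ)]

open Matrix in
theorem sq_trace_diagonal_mul_le {n R : Type*} [CommRing R] [LinearOrder R] [IsStrictOrderedRing R]
    [Fintype n] [DecidableEq n] {S : Matrix n n R} (hS : S.IsSymm) {c : n → R} (hc : ∀ i, 0 ≤ c i) :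
    (diagonal c * S).trace ^ 2 ≤
      Fintype.card n * ((diagonal c * S) * (diagonal c * S)).trace := by
  have hterm (i j) : (diagonal c * S) i j * (diagonal c * S) j i = c i * c j * S i j ^ 2 := by
    rw [diagonal_mul, diagonal_mul, hS.apply i j]
    ring
  calc (diagonal c * S).trace ^ 2
      ≤ Fintype.card n * ∑ i, (diagonal c * S) i i ^ 2 := sq_sum_le_card_mul_sum_sq
    _ ≤ Fintype.card n * ∑ i, ∑ j, (diagonal c * S) i j * (diagonal c * S) j i := by
        gcongr with i
        rw [sq]
        refine Finset.single_le_sum (f := fun j ↦ (diagonal c * S) i j * (diagonal c * S) j i)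
          (fun j _ ↦ ?_) (Finset.mem_univ i)
        rw [hterm]
        exact mul_nonneg (mul_nonneg (hc i) (hc j)) (sq_nonneg _)
    _ = _ := rfl

section OrthogonalResidual

variable {R M ι : Type*} [CommRing R] [AddCommGroup M] [Module R M] [Fintype ι]
  {B : LinearMap.BilinForm R M} {f : ι → M} {w : ι → R} {D : R}

/-- `D` times the component of `y` orthogonal to the orthogonal family `f`. The scale `D` clears
denominators: the weights are meant to satisfy `w i * B (f i) (f i) = D`. -/
def orthogonalResidual (B : LinearMap.BilinForm R M) (f : ι → M) (w : ι → R) (D : R) (y : M) : M :=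
  D • y - ∑ i, (w i * B y (f i)) • f i

theorem orthogonalResidual_apply (y z : M) :
    B (orthogonalResidual B f w D y) z = D * B y z - ∑ i, w i * (B y (f i) * B (f i) z) := by
  simp only [orthogonalResidual, map_sub, map_smul, map_sum, LinearMap.sub_apply,
    LinearMap.smul_apply, LinearMap.sum_apply, smul_eq_mul, mul_assoc]

theorem orthogonalResidual_apply_eq_zero (hf : B.IsOrthoᵢ f)
    (hw : ∀ i, w i * B (f i) (f i) = D) (y : M) (j : ι) :
    B (orthogonalResidual B f w D y) (f j) = 0 := by
  have hsum : ∑ i, w i * (B y (f i) * B (f i) (f j)) = w j * (B y (f j) * B (f j) (f j)) :=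
    Fintype.sum_eq_single j fun i hi ↦ by rw [hf hi, mul_zero, mul_zero]
  rw [orthogonalResidual_apply, hsum, ← hw j]
  ring

end OrthogonalResidual

namespace IsPosDefSymm

section PartialOrder

variable {R M : Type*} [CommRing R] [PartialOrder R] [AddCommGroup M] [Module R M]
  {B : LinearMap.BilinForm R M}

theorem apply_self_nonneg (hB : IsPosDefSymm B) (x : M) : 0 ≤ B x x := by
  rcases eq_or_ne x 0 with rfl | hx
  · rw [map_zero]
  · exact (hB.pos x hx).le

theorem eq_zero_of_apply_self_eq_zero (hB : IsPosDefSymm B) {x : M} (hx : B x x = 0) : x = 0 :=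
  not_imp_comm.mp (hB.pos x) hx.not_gt

end PartialOrder

section LinearOrder

variable {R M : Type*} [CommRing R] [LinearOrder R] [IsStrictOrderedRing R] [AddCommGroup M]
  [Module R M] {B : LinearMap.BilinForm R M}

theorem sum_mul_sq_apply_le {ι : Type*} [Fintype ι] {f : ι → M} {w : ι → R} {D : R}
    (hB : IsPosDefSymm B) (hf : B.IsOrthoᵢ f) (hw : ∀ i, w i * B (f i) (f i) = D)
    (hD : 0 < D) (y : M) : ∑ i, w i * B y (f i) ^ 2 ≤ D * B y y := by
  set ρ := orthogonalResidual B f w D y with hρ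
  have hself : B ρ ρ = D * B ρ y := by
    have hortho (i) : B (f i) ρ = 0 := by
      rw [hB.symm, hρ, orthogonalResidual_apply_eq_zero hf hw]
    nth_rw 1 [hρ]
    simp only [orthogonalResidual_apply, hortho, mul_zero, Finset.sum_const_zero, sub_zero,
      hB.symm y]
  have hnonneg : 0 ≤ B ρ y :=
    nonneg_of_mul_nonneg_right (hself ▸ hB.apply_self_nonneg ρ) hD
  rw [hρ, orthogonalResidual_apply, sub_nonneg] at hnonneg
  simpa only [hB.symm _ y, sq] using hnonneg

theorem exists_orthogonal_finset [Module.Finite R M] (hB : IsPosDefSymm B) :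
    ∃ E : Finset M, #E ≤ Module.finrank R M ∧ B.IsOrthoᵢ (Subtype.val : E → M) ∧
      (∀ e ∈ E, e ≠ 0) ∧ ∀ z, (∀ e ∈ E, B z e = 0) → z = 0 := by
  classical
  let P : Set (Finset M) := {E | (E : Set M).Pairwise (fun x y ↦ B x y = 0) ∧ ∀ e ∈ E, e ≠ 0}
  have hortho {E} (hE : E ∈ P) : B.IsOrthoᵢ (Subtype.val : E → M) := fun x y hxy ↦
    hE.1 x.2 y.2 (Subtype.coe_ne_coe.mpr hxy)
  have hcard {E} (hE : E ∈ P) : #E ≤ Module.finrank R M := by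
    simpa only [Fintype.card_coe] using
      card_le_finrank_of_isOrthoᵢ (hortho hE) fun e ↦ (hB.pos e (hE.2 e e.2)).ne'
  obtain ⟨E, hE, hmax⟩ := Set.Finite.exists_maximalFor' Finset.card P
    ((Set.finite_Iic (Module.finrank R M)).subset (Set.image_subset_iff.mpr fun _ ↦ hcard))
    ⟨∅, by simp [P]⟩
  refine ⟨E, hcard hE, hortho hE, hE.2, fun z hz ↦ by_contra fun hz0 ↦ ?_⟩
  have hzE : z ∉ E := fun h ↦ (hB.pos z hz0).ne' (hz z h)
  have hins : insert z E ∈ P := by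
    refine ⟨?_, Finset.forall_mem_insert _ _ _ |>.mpr ⟨hz0, hE.2⟩⟩
    rw [Finset.coe_insert]
    exact hE.1.insert fun e he _ ↦ ⟨hz e he, (hB.symm e z).trans (hz e he)⟩
  have hle : #(insert z E) ≤ #E := hmax hins (Finset.card_le_card (Finset.subset_insert z E))
  rw [Finset.card_insert_of_notMem hzE] at hle
  omega

theorem exists_parseval [Module.Finite R M] (hB : IsPosDefSymm B) :
    ∃ (E : Finset M) (w : E → R) (D : R), #E ≤ Module.finrank R M ∧ 0 < D ∧ (∀ e, 0 ≤ w e) ∧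
      ∀ x y, D * B x y = ∑ e, w e * (B x e * B y e) := by
  classical
  obtain ⟨E, hcard, hortho, hne, hcomplete⟩ := hB.exists_orthogonal_finset
  have hpos (e : E) : 0 < B e e := hB.pos e (hne e e.2)
  let w (e : E) : R := ∏ e' ∈ Finset.univ.erase e, B (e' : M) e'
  let D : R := ∏ e : E, B (e : M) e
  have hw (e : E) : w e * B e e = D :=
    Finset.prod_erase_mul Finset.univ (fun e : E ↦ B (e : M) e) (Finset.mem_univ e)
  refine ⟨E, w, D, hcard, Finset.prod_pos fun e _ ↦ hpos e,
    fun e ↦ Finset.prod_nonneg fun e' _ ↦ (hpos e').le, fun x y ↦ ?_⟩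
  have hzero : orthogonalResidual B Subtype.val w D x = 0 := hcomplete _ fun e he ↦
    orthogonalResidual_apply_eq_zero hortho hw x ⟨e, he⟩
  have h := orthogonalResidual_apply (B := B) (f := Subtype.val) (w := w) (D := D) x y
  rw [hzero, map_zero, LinearMap.zero_apply, eq_comm, sub_eq_zero] at h
  simpa only [hB.symm _ y] using h

open Matrix in
theorem sq_sum_apply_self_le [Module.Finite R M] {ι : Type*} [Fintype ι]
    (hB : IsPosDefSymm B) (x : ι → M) :
    (∑ i, B (x i) (x i)) ^ 2 ≤ Module.finrank R M * ∑ i, ∑ j, B (x i) (x j) ^ 2 := by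
  classical
  obtain ⟨E, w, D, hcard, hD, hw, hparseval⟩ := hB.exists_parseval
  let G : Matrix ι ι R := Matrix.of fun i j ↦ B (x i) (x j)
  let A : Matrix ι E R := Matrix.of fun i e ↦ B (x i) e
  have hfactor : D • G = A * (diagonal w * Aᵀ) := by
    ext i j
    rw [mul_apply]
    simp only [G, A, Matrix.smul_apply, of_apply, smul_eq_mul, hparseval, diagonal_mul,
      transpose_apply, mul_left_comm]
  have htrace : (D • G).trace = (diagonal w * (Aᵀ * A)).trace := by
    rw [hfactor, trace_mul_comm, Matrix.mul_assoc]
  have htrace_sq : ((D • G) * (D • G)).trace =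
      ((diagonal w * (Aᵀ * A)) * (diagonal w * (Aᵀ * A))).trace := by
    rw [hfactor, Matrix.mul_assoc, trace_mul_comm]
    simp only [Matrix.mul_assoc]
  have hGG : (G * G).trace = ∑ i, ∑ j, B (x i) (x j) ^ 2 :=
    Finset.sum_congr rfl fun i _ ↦ Finset.sum_congr rfl fun j _ ↦ by
      simp only [G, of_apply, hB.symm (x j), sq]
  have hscaled : D ^ 2 * G.trace ^ 2 ≤ D ^ 2 * (#E * (G * G).trace) := by
    have hsymm : (Aᵀ * A).IsSymm := by rw [IsSymm, transpose_mul, transpose_transpose]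
    have h := sq_trace_diagonal_mul_le hsymm hw
    rw [← htrace, ← htrace_sq, Fintype.card_coe, smul_mul_smul_comm, trace_smul, trace_smul,
      smul_eq_mul, smul_eq_mul] at h
    linear_combination h
  calc G.trace ^ 2 ≤ #E * (G * G).trace := le_of_mul_le_mul_left hscaled (by positivity)
    _ ≤ Module.finrank R M * ∑ i, ∑ j, B (x i) (x j) ^ 2 := by
        rw [hGG]
        gcongr

end LinearOrder

end IsPosDefSymm

theorem finite_quotient_range_lsmul {M : Type*} [AddCommGroup M] [Module.Finite ℤ M] {m : ℤ}
    (hm : m ≠ 0) : Finite (M ⧸ LinearMap.range (LinearMap.lsmul ℤ M m)) := by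
  refine Module.finite_of_fg_torsion _ fun {q} ↦ ?_
  obtain ⟨x, rfl⟩ := Submodule.Quotient.mk_surjective _ q
  exact ⟨⟨m, mem_nonZeroDivisors_of_ne_zero hm⟩, (Submodule.Quotient.mk_eq_zero _).mpr ⟨x, rfl⟩⟩

namespace IsPosDefSymm

variable {M : Type*} [AddCommGroup M] {B : LinearMap.BilinForm ℤ M}

theorem finite_setOf_apply_self_le [Module.Finite ℤ M] (hB : IsPosDefSymm B) (n : ℤ) :
    {x | B x x ≤ n}.Finite := by
  -- Two vectors of norm at most `n` that are congruent modulo `2 n + 1` are equal.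
  let m : ℤ := 2 * n + 1
  have : Finite (M ⧸ LinearMap.range (LinearMap.lsmul ℤ M m)) :=
    finite_quotient_range_lsmul (by omega)
  refine Set.Finite.of_finite_image (Set.toFinite (Submodule.Quotient.mk (p := LinearMap.range
    (LinearMap.lsmul ℤ M m)) '' _)) fun x (hx : B x x ≤ n) y (hy : B y y ≤ n) hxy ↦ ?_
  obtain ⟨z, hz : m • z = x - y⟩ := (Submodule.Quotient.eq _).mp hxy
  have hparallelogram : m ^ 2 * B z z + B (x + y) (x + y) = 2 * B x x + 2 * B y y := by
    have hmz : m ^ 2 * B z z = B (x - y) (x - y) := by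
      rw [← hz]
      simp only [map_smul, LinearMap.smul_apply, smul_eq_mul]
      ring
    rw [hmz]
    simp only [map_add, map_sub, LinearMap.add_apply, LinearMap.sub_apply]
    ring
  have hz0 : z = 0 := by
    by_contra hz0
    have hm : 4 * n < m ^ 2 := by nlinarith [sq_nonneg n]
    have hmz : m ^ 2 ≤ m ^ 2 * B z z := le_mul_of_one_le_right (sq_nonneg m) (hB.pos z hz0)
    linarith [hB.apply_self_nonneg (x + y)]
  rwa [hz0, smul_zero, eq_comm, sub_eq_zero] at hz

end IsPosDefSymm

/-- The roots of the lattice with form `B`: its vectors of norm `2`. -/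
def latticeRoots {M : Type*} [AddCommGroup M] (B : LinearMap.BilinForm ℤ M) : Set M :=
  {x | B x x = 2}

/-- The neighbors of a root `v`: the roots at angle `π / 3` with `v`. They are the vertices around
`v` in the graph on the roots whose degrees govern the sum of squared Gram entries. -/
def rootNeighbors {M : Type*} [AddCommGroup M] (B : LinearMap.BilinForm ℤ M) (v : M) : Set M :=
  {x ∈ latticeRoots B | B v x = 1}

/-- A family of pairwise orthogonal neighbors of `v`. -/
structure IsOrthoNeighbors {M ι : Type*} [AddCommGroup M] (B : LinearMap.BilinForm ℤ M) (v : M)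
    (f : ι → M) : Prop where
  mem : ∀ i, f i ∈ rootNeighbors B v
  ortho : B.IsOrthoᵢ f

/-- The pillar over `A` of a family `f` of neighbors of `v`, in the sense of Lemmens and Seidel:
the neighbors of `v` whose products with `f` are the indicator function of `A`. -/
def pillar {M ι : Type*} [AddCommGroup M] [DecidableEq ι] (B : LinearMap.BilinForm ℤ M) (v : M)
    (f : ι → M) (A : Finset ι) : Set M :=
  {x ∈ rootNeighbors B v | ∀ k, B (f k) x = if k ∈ A then 1 else 0}

/-- Twice the component orthogonal to `f` of a vector `x` in the pillar of `f` over `A`. -/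
def pillarVector {M ι : Type*} [AddCommGroup M] (f : ι → M) (A : Finset ι) (x : M) : M :=
  (2 : ℤ) • x - ∑ k ∈ A, f k

section Roots

variable {M ι : Type*} [AddCommGroup M] {B : LinearMap.BilinForm ℤ M} {v x : M}

theorem mem_latticeRoots : x ∈ latticeRoots B ↔ B x x = 2 := Iff.rfl

theorem neg_mem_latticeRoots (hx : x ∈ latticeRoots B) : -x ∈ latticeRoots B := by
  rwa [mem_latticeRoots, map_neg, map_neg, LinearMap.neg_apply, neg_neg]

namespace IsOrthoNeighbors

theorem apply_eq_ite [DecidableEq ι] {f : ι → M} (hf : IsOrthoNeighbors B v f) (i j : ι) :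
    B (f i) (f j) = if i = j then 2 else 0 := by
  split_ifs with h
  · rw [← h]
    exact (hf.mem i).1
  · exact hf.ortho h

theorem sum_apply [DecidableEq ι] {f : ι → M} (hf : IsOrthoNeighbors B v f) (A : Finset ι) (j : ι) :
    ∑ i ∈ A, B (f i) (f j) = if j ∈ A then 2 else 0 := by
  simp only [hf.apply_eq_ite, Finset.sum_ite_eq']

end IsOrthoNeighbors

end Roots

namespace IsPosDefSymm

variable {M ι : Type*} [AddCommGroup M] {B : LinearMap.BilinForm ℤ M} {v x y : M}

theorem apply_sub_self (hB : IsPosDefSymm B) (x y : M) :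
    B (x - y) (x - y) = B x x - 2 * B x y + B y y := by
  simp only [map_sub, LinearMap.sub_apply, hB.symm y x]
  ring

theorem apply_le_two (hB : IsPosDefSymm B) (hx : x ∈ latticeRoots B) (hy : y ∈ latticeRoots B) :
    B x y ≤ 2 := by
  have hxx := mem_latticeRoots.mp hx
  have hyy := mem_latticeRoots.mp hy
  linarith [hB.apply_self_nonneg (x - y), hB.apply_sub_self x y]

theorem eq_of_apply_eq_two (hB : IsPosDefSymm B) (hx : x ∈ latticeRoots B)
    (hy : y ∈ latticeRoots B) (hxy : B x y = 2) : x = y := by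
  have hxx := mem_latticeRoots.mp hx
  have hyy := mem_latticeRoots.mp hy
  refine sub_eq_zero.mp (hB.eq_zero_of_apply_self_eq_zero ?_)
  linarith [hB.apply_sub_self x y]

theorem apply_le_one (hB : IsPosDefSymm B) (hx : x ∈ latticeRoots B) (hy : y ∈ latticeRoots B)
    (hne : x ≠ y) : B x y ≤ 1 :=
  Int.lt_add_one_iff.mp <|
    (hB.apply_le_two hx hy).lt_of_ne fun h ↦ hne (hB.eq_of_apply_eq_two hx hy h)

theorem sub_mem_rootNeighbors (hB : IsPosDefSymm B) (hv : v ∈ latticeRoots B)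
    (hx : x ∈ rootNeighbors B v) : v - x ∈ rootNeighbors B v := by
  have hvv := mem_latticeRoots.mp hv
  have hxx := mem_latticeRoots.mp hx.1
  refine ⟨?_, by rw [map_sub, hvv, hx.2]; rfl⟩
  rw [mem_latticeRoots, hB.apply_sub_self, hvv, hxx, hx.2]
  rfl

theorem apply_sub_of_mem_rootNeighbors (hB : IsPosDefSymm B) (hx : x ∈ rootNeighbors B v) (y : M) :
    B x (v - y) = 1 - B x y := by
  rw [map_sub, hB.symm x v, hx.2]

theorem apply_nonneg_of_mem_rootNeighbors (hB : IsPosDefSymm B) (hv : v ∈ latticeRoots B)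
    (hx : x ∈ rootNeighbors B v) (hy : y ∈ rootNeighbors B v) (hne : x ≠ v - y) :
    0 ≤ B x y := by
  have h := hB.apply_le_one hx.1 (hB.sub_mem_rootNeighbors hv hy).1 hne
  rw [hB.apply_sub_of_mem_rootNeighbors hx] at h
  linarith

end IsPosDefSymm

section Pillar

variable {M ι : Type*} [AddCommGroup M] [DecidableEq ι] {B : LinearMap.BilinForm ℤ M} {v : M}
  {f : ι → M} {A A' : Finset ι} {x y : M}

theorem sum_apply_of_mem_pillar (hx : x ∈ pillar B v f A) (A' : Finset ι) :
    ∑ k ∈ A', B (f k) x = #(A' ∩ A) := by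
  simp only [hx.2, Finset.sum_ite_mem, Finset.sum_const, nsmul_eq_mul, mul_one]

theorem IsOrthoNeighbors.apply_pillarVector_eq_zero (hf : IsOrthoNeighbors B v f)
    (hx : x ∈ pillar B v f A) (k : ι) : B (f k) (pillarVector f A x) = 0 := by
  have h : B (f k) (∑ l ∈ A, f l) = if k ∈ A then 2 else 0 := by
    simp only [map_sum, hf.apply_eq_ite, Finset.sum_ite_eq]
  rw [pillarVector, map_sub, map_smul, h, hx.2 k]
  split_ifs <;> rfl

namespace IsPosDefSymm

theorem apply_sum_of_mem_pillar (hB : IsPosDefSymm B) (hx : x ∈ pillar B v f A) (A' : Finset ι) :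
    B x (∑ k ∈ A', f k) = #(A' ∩ A) := by
  rw [hB.symm, map_sum, LinearMap.sum_apply, sum_apply_of_mem_pillar hx]

theorem apply_eq_one_of_mem_pillar (hB : IsPosDefSymm B) (hf : IsOrthoNeighbors B v f)
    (hA : #A = 2) (hx : x ∈ pillar B v f A) (hy : y ∈ pillar B v f A) (hne : x ≠ y)
    (hne' : x ≠ ∑ k ∈ A, f k - y) : B x y = 1 := by
  have hsum {z : M} (hz : z ∈ pillar B v f A) : B z (∑ k ∈ A, f k) = 2 := by
    rw [hB.apply_sum_of_mem_pillar hz, Finset.inter_self, hA, Nat.cast_ofNat]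
  have hsumself : B (∑ k ∈ A, f k) (∑ k ∈ A, f k) = 4 := by
    have hterm : ∀ l ∈ A, ∑ k ∈ A, B (f k) (f l) = 2 := fun l hl ↦ by rw [hf.sum_apply, if_pos hl]
    rw [map_sum, Finset.sum_congr rfl fun l hl ↦ by
      rw [map_sum, LinearMap.sum_apply, hterm l hl], Finset.sum_const, hA]
    rfl
  have hyy := mem_latticeRoots.mp hy.1.1
  have hroot : ∑ k ∈ A, f k - y ∈ latticeRoots B := by
    rw [mem_latticeRoots, hB.apply_sub_self, hsumself, hB.symm _ y, hsum hy, hyy]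
    rfl
  have hle := hB.apply_le_one hx.1.1 hroot hne'
  rw [map_sub, hsum hx] at hle
  linarith [hB.apply_le_one hx.1.1 hy.1.1 hne]

theorem pillarVector_apply_pillarVector (hB : IsPosDefSymm B) (hf : IsOrthoNeighbors B v f)
    (hx : x ∈ pillar B v f A) (hy : y ∈ pillar B v f A') :
    B (pillarVector f A x) (pillarVector f A' y) = 4 * B x y - 2 * #(A ∩ A') := by
  have hsum : B (∑ k ∈ A, f k) (pillarVector f A' y) = 0 := by
    rw [map_sum, LinearMap.sum_apply]
    exact Finset.sum_eq_zero fun k _ ↦ hf.apply_pillarVector_eq_zero hy k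
  rw [pillarVector, map_sub, LinearMap.sub_apply, hsum, sub_zero, pillarVector]
  simp only [map_sub, map_smul, LinearMap.smul_apply, smul_eq_mul, hB.apply_sum_of_mem_pillar hx,
    Finset.inter_comm A' A]
  ring

theorem exists_finset_pillar (hB : IsPosDefSymm B) (hf : IsOrthoNeighbors B v f)
    (hfin : (pillar B v f A).Finite) (hA : #A = 2) :
    ∃ D : Finset M, (∀ x ∈ D, x ∈ pillar B v f A) ∧ (pillar B v f A).ncard ≤ 2 * #D ∧
      B.IsOrthoᵢ fun x : D ↦ pillarVector f A (x : M) := by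
  have : Std.Symm fun x y ↦ B x y = 1 := ⟨fun x y h ↦ (hB.symm y x).trans h⟩
  obtain ⟨D, hD, hone, hcard⟩ := exists_finset_pairwise_of_finite hfin
    (fun y ↦ ∑ k ∈ A, f k - y) fun x hx y hy ↦ hB.apply_eq_one_of_mem_pillar hf hA hx hy
  refine ⟨D, hD, hcard, fun x y hxy ↦ ?_⟩
  have hxy1 : B (x : M) y = 1 := hone x.2 y.2 (Subtype.coe_ne_coe.mpr hxy)
  rw [Function.onFun, hB.pillarVector_apply_pillarVector hf (hD x.2) (hD y.2), hxy1,
    Finset.inter_self, hA]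
  rfl

theorem pillarVector_apply_self (hB : IsPosDefSymm B) (hf : IsOrthoNeighbors B v f)
    (hA : #A = 2) (hx : x ∈ pillar B v f A) :
    B (pillarVector f A x) (pillarVector f A x) = 4 := by
  rw [hB.pillarVector_apply_pillarVector hf hx hx, mem_latticeRoots.mp hx.1.1, Finset.inter_self,
    hA]
  rfl

theorem ncard_pillar_add_le [Module.Finite ℤ M] [Fintype ι] (hB : IsPosDefSymm B)
    (hf : IsOrthoNeighbors B v f) (hfin : (pillar B v f A).Finite) (hA : #A = 2) :
    (pillar B v f A).ncard + 2 * Fintype.card ι ≤ 2 * Module.finrank ℤ M := by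
  obtain ⟨D, hD, hcard, hortho⟩ := hB.exists_finset_pillar hf hfin hA
  let g : ι ⊕ D → M := Sum.elim f fun x ↦ pillarVector f A x
  have hg : B.IsOrthoᵢ g := by
    rintro (i | x) (j | y) hij
    · exact hf.ortho (Sum.inl_injective.ne_iff.mp hij)
    · exact hf.apply_pillarVector_eq_zero (hD y y.2) i
    · exact (hB.symm _ _).trans (hf.apply_pillarVector_eq_zero (hD x x.2) j)
    · exact hortho (Sum.inr_injective.ne_iff.mp hij)
  have hne : ∀ i, B (g i) (g i) ≠ 0 := by
    rintro (i | x)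
    · exact (mem_latticeRoots.mp (hf.mem i).1).trans_ne two_ne_zero
    · exact (hB.pillarVector_apply_self hf hA (hD x x.2)).trans_ne four_ne_zero
  have hrank := card_le_finrank_of_isOrthoᵢ hg hne
  rw [Fintype.card_sum, Fintype.card_coe] at hrank
  linarith

theorem ncard_pillar_le_eight (hB : IsPosDefSymm B) (hf : IsOrthoNeighbors B v f)
    (hfin : (pillar B v f A).Finite) (hA : #A = 2) (hA' : #A' = 2) (hcross : #(A ∩ A') = 1)
    (hne : (pillar B v f A').Nonempty) : (pillar B v f A).ncard ≤ 8 := by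
  -- All pillar vectors have norm `4`, and those over `A` have products `4 B y x - 2` with one over
  -- `A'`. These products are nonzero, so Bessel's inequality leaves room for four orthogonal ones.
  obtain ⟨D, hD, hcard, hortho⟩ := hB.exists_finset_pillar hf hfin hA
  obtain ⟨y, hy⟩ := hne
  have hbessel := hB.sum_mul_sq_apply_le hortho (w := fun _ ↦ 1) (D := 4)
    (fun x ↦ by rw [hB.pillarVector_apply_self hf hA (hD x x.2), one_mul]) four_pos
    (pillarVector f A' y)
  have hterm (x : D) : 4 ≤ 1 * B (pillarVector f A' y) (pillarVector f A x) ^ 2 := by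
    have hodd : 0 < (2 * B y x - 1) ^ 2 := sq_pos_of_ne_zero (by omega)
    rw [hB.pillarVector_apply_pillarVector hf hy (hD x x.2), Finset.inter_comm, hcross]
    push_cast
    linarith
  have hsum := Finset.card_nsmul_le_sum Finset.univ _ 4 fun x _ ↦ hterm x
  rw [hB.pillarVector_apply_self hf hA' hy] at hbessel
  rw [Finset.card_univ, Fintype.card_coe, nsmul_eq_mul] at hsum
  have hD4 : #D ≤ 4 := by
    zify
    linarith
  exact hcard.trans (Nat.mul_le_mul_left 2 hD4)

end IsPosDefSymm

end Pillar

theorem card_inter_eq_one_of_ne_compl {A A' : Finset (Fin 4)} (hA : #A = 2) (hA' : #A' = 2)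
    (hne : A' ≠ A) (hne' : A' ≠ Aᶜ) : #(A' ∩ A) = 1 := by
  decide +revert

theorem sum_powersetCard_two_le {c : Finset (Fin 4) → ℕ} {n : ℕ}
    (hle : ∀ A, #A = 2 → c A + 8 ≤ n)
    (hcross : ∀ A A', #A = 2 → #A' = 2 → #(A ∩ A') = 1 → c A' ≠ 0 → c A ≤ 8) :
    ∑ A ∈ Finset.univ.powersetCard 2, c A ≤ 48 ∨
      ∑ A ∈ Finset.univ.powersetCard 2, c A + 16 ≤ 2 * n := by
  by_cases hall : ∀ A ∈ Finset.univ.powersetCard 2, c A ≤ 8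
  · exact .inl (Finset.sum_le_card_nsmul _ _ 8 hall)
  push Not at hall
  obtain ⟨A, hA, hA8⟩ := hall
  rw [Finset.mem_powersetCard_univ] at hA
  have hAc : #Aᶜ = 2 := by rw [Finset.card_compl, Fintype.card_fin, hA]
  have hzero : ∀ A' ∈ Finset.univ.powersetCard 2, A' ∉ ({A, Aᶜ} : Finset _) → c A' = 0 := by
    intro A' hA' hnotMem
    rw [Finset.mem_powersetCard_univ] at hA'
    rw [Finset.mem_insert, Finset.mem_singleton, not_or] at hnotMem
    by_contra hne
    have hinter := card_inter_eq_one_of_ne_compl hA hA' hnotMem.1 hnotMem.2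
    exact hA8.not_ge (hcross A A' hA hA' (Finset.inter_comm A A' ▸ hinter) hne)
  have hsub : {A, Aᶜ} ⊆ Finset.univ.powersetCard 2 := by
    simp only [Finset.insert_subset_iff, Finset.singleton_subset_iff, Finset.mem_powersetCard_univ,
      hA, hAc, and_self]
  right
  rw [← Finset.sum_subset hsub hzero, Finset.sum_pair ne_compl_self]
  linarith [hle A hA, hle Aᶜ hAc]

namespace IsPosDefSymm

variable {M : Type*} [AddCommGroup M] {B : LinearMap.BilinForm ℤ M} {v : M}

theorem finite_latticeRoots [Module.Finite ℤ M] (hB : IsPosDefSymm B) : (latticeRoots B).Finite :=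
  (hB.finite_setOf_apply_self_le 2).subset fun _ hx ↦ le_of_eq hx

theorem finite_rootNeighbors [Module.Finite ℤ M] (hB : IsPosDefSymm B) (v : M) :
    (rootNeighbors B v).Finite :=
  hB.finite_latticeRoots.subset (Set.sep_subset _ _)

theorem finite_pillar [Module.Finite ℤ M] {ι : Type*} [DecidableEq ι] (hB : IsPosDefSymm B)
    (v : M) (f : ι → M) (A : Finset ι) : (pillar B v f A).Finite :=
  (hB.finite_rootNeighbors v).subset (Set.sep_subset _ _)

theorem sum_orthoNeighbors_eq_two_smul (hB : IsPosDefSymm B)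
    (hv : v ∈ latticeRoots B) {f : Fin 4 → M} (hf : IsOrthoNeighbors B v f) :
    ∑ k, f k = (2 : ℤ) • v := by
  have hvv := mem_latticeRoots.mp hv
  have hfv (k) : B (f k) v = 1 := (hB.symm _ _).trans (hf.mem k).2
  refine sub_eq_zero.mp (hB.eq_zero_of_apply_self_eq_zero ?_)
  rw [hB.apply_sub_self]
  simp only [map_sum, map_smul, LinearMap.sum_apply, LinearMap.smul_apply, hf.sum_apply,
    Finset.mem_univ, if_true, hfv, hvv, Finset.sum_const, Finset.card_univ, Fintype.card_fin]
  rfl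

theorem exists_orthoNeighbors_four (hB : IsPosDefSymm B) (hv : v ∈ latticeRoots B)
    {f : Fin 3 → M} (hf : IsOrthoNeighbors B v f) : ∃ g : Fin 4 → M, IsOrthoNeighbors B v g := by
  have hvv := mem_latticeRoots.mp hv
  have hfv (k) : B (f k) v = 1 := (hB.symm _ _).trans (hf.mem k).2
  set t := (2 : ℤ) • v - ∑ k, f k with ht
  have hft (k) : B (f k) t = 0 := by
    simp only [ht, map_sub, map_smul, map_sum, hfv, hf.apply_eq_ite, Finset.sum_ite_eq,
      Finset.mem_univ, if_true]
    rfl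
  have hvt : B v t = 1 := by
    simp only [ht, map_sub, map_smul, map_sum, hvv, (hf.mem _).2]
    rfl
  have htt : B t t = 2 := by
    nth_rw 1 [ht]
    simp only [map_sub, map_smul, map_sum, LinearMap.sub_apply, LinearMap.smul_apply,
      LinearMap.sum_apply, hft, hvt]
    rfl
  refine ⟨Fin.cons t f, Fin.cases ⟨htt, hvt⟩ hf.mem, fun i j hij ↦ ?_⟩
  induction i using Fin.cases <;> induction j using Fin.cases
  · exact absurd rfl hij
  · exact (hB.symm _ _).trans (hft _)
  · exact hft _
  · exact hf.ortho ((Fin.succ_injective _).ne_iff.mp hij)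

theorem exists_mem_pillar (hB : IsPosDefSymm B) (hv : v ∈ latticeRoots B) {f : Fin 4 → M}
    (hf : IsOrthoNeighbors B v f) {x : M} (hx : x ∈ rootNeighbors B v) (hne : ∀ k, x ≠ f k)
    (hne' : ∀ k, x ≠ v - f k) : ∃ A ∈ Finset.univ.powersetCard 2, x ∈ pillar B v f A := by
  have hbound (k) : 0 ≤ B (f k) x ∧ B (f k) x ≤ 1 := by
    rw [hB.symm]
    exact ⟨hB.apply_nonneg_of_mem_rootNeighbors hv hx (hf.mem k) (hne' k),
      hB.apply_le_one hx.1 (hf.mem k).1 (hne k)⟩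
  have hite (k) : B (f k) x = if B (f k) x = 1 then 1 else 0 := by
    have := hbound k
    split_ifs <;> omega
  refine ⟨({k | B (f k) x = 1} : Finset (Fin 4)), ?_, hx, fun k ↦ ?_⟩
  · have hsum : ∑ k, B (f k) x = 2 := by
      rw [← LinearMap.sum_apply, ← map_sum, hB.sum_orthoNeighbors_eq_two_smul hv hf, map_smul,
        LinearMap.smul_apply, hx.2]
      rfl
    rw [Finset.mem_powersetCard_univ, ← Nat.cast_inj (R := ℤ), Finset.natCast_card_filter,
      ← Finset.sum_congr rfl fun k _ ↦ hite k, hsum]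
    rfl
  · simpa only [Finset.mem_filter_univ] using hite k

theorem ncard_rootNeighbors_le_add_sum_pillar [Module.Finite ℤ M] (hB : IsPosDefSymm B)
    (hv : v ∈ latticeRoots B) {f : Fin 4 → M} (hf : IsOrthoNeighbors B v f) :
    (rootNeighbors B v).ncard ≤
      8 + ∑ A ∈ Finset.univ.powersetCard 2, (pillar B v f A).ncard := by
  let E : Set M := Set.range f ∪ Set.range fun k ↦ v - f k
  let P : Set M := ⋃ A ∈ Finset.univ.powersetCard 2, pillar B v f A
  have hcover : rootNeighbors B v ⊆ E ∪ P := by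
    intro x hx
    by_cases hxE : x ∈ E
    · exact .inl hxE
    simp only [E, Set.mem_union, Set.mem_range, not_or, not_exists] at hxE
    obtain ⟨A, hA, hxA⟩ := hB.exists_mem_pillar hv hf hx (fun k ↦ Ne.symm (hxE.1 k))
      fun k ↦ Ne.symm (hxE.2 k)
    exact .inr (Set.mem_biUnion hA hxA)
  have hrange (g : Fin 4 → M) : (Set.range g).ncard ≤ 4 := by
    rw [← Set.image_univ]
    exact (Set.ncard_image_le).trans_eq (by rw [Set.ncard_univ, Nat.card_fin])
  have hE : E.ncard ≤ 8 := (Set.ncard_union_le _ _).trans (add_le_add (hrange _) (hrange _))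
  have hEP : (E ∪ P).Finite := ((Set.finite_range _).union (Set.finite_range _)).union
    (Finset.finite_toSet _ |>.biUnion fun A _ ↦ hB.finite_pillar v f A)
  calc (rootNeighbors B v).ncard ≤ (E ∪ P).ncard := Set.ncard_le_ncard hcover hEP
    _ ≤ E.ncard + P.ncard := Set.ncard_union_le E P
    _ ≤ _ := add_le_add hE (Finset.set_ncard_biUnion_le _ _)

theorem ncard_rootNeighbors_le_of_isOrthoNeighbors [Module.Finite ℤ M] (hB : IsPosDefSymm B)
    (hv : v ∈ latticeRoots B) {f : Fin 4 → M} (hf : IsOrthoNeighbors B v f) :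
    (rootNeighbors B v).ncard ≤ 56 ∨
      (rootNeighbors B v).ncard + 8 ≤ 4 * Module.finrank ℤ M := by
  have hcover := hB.ncard_rootNeighbors_le_add_sum_pillar hv hf
  have hpillars := sum_powersetCard_two_le
    (fun A hA ↦ hB.ncard_pillar_add_le hf (hB.finite_pillar v f A) hA)
    fun A A' hA hA' hcross hne ↦ hB.ncard_pillar_le_eight hf (hB.finite_pillar v f A) hA hA' hcross
      (Set.nonempty_of_ncard_ne_zero hne)
  omega

theorem isOrthoNeighbors_three (hB : IsPosDefSymm B) {x y z : M} (hx : x ∈ rootNeighbors B v)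
    (hy : y ∈ rootNeighbors B v) (hz : z ∈ rootNeighbors B v) (hxy : B x y = 0) (hxz : B x z = 0)
    (hyz : B y z = 0) : IsOrthoNeighbors B v ![x, y, z] where
  mem i := by fin_cases i <;> assumption
  ortho i j hij := by
    fin_cases i <;> fin_cases j
    exacts [absurd rfl hij, hxy, hxz, (hB.symm y x).trans hxy, absurd rfl hij, hyz,
      (hB.symm z x).trans hxz, (hB.symm z y).trans hyz, absurd rfl hij]

theorem apply_eq_one_of_forall_not_isOrthoNeighbors (hB : IsPosDefSymm B)
    (hv : v ∈ latticeRoots B) (h : ∀ f : Fin 3 → M, ¬ IsOrthoNeighbors B v f) {w x y : M}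
    (hw : w ∈ rootNeighbors B v) (hx : x ∈ rootNeighbors B v) (hy : y ∈ rootNeighbors B v)
    (hwx : 1 ≤ B w x) (hwy : 1 ≤ B w y) (hne : x ≠ y) : B x y = 1 := by
  -- Otherwise `B w x = B w y = 1` and `B x y = 0`, which makes `v - w, x, y` orthogonal.
  rcases eq_or_ne w x with rfl | hwx_ne
  · exact le_antisymm (hB.apply_le_one hw.1 hy.1 hne) hwy
  rcases eq_or_ne w y with rfl | hwy_ne
  · exact le_antisymm (hB.apply_le_one hx.1 hw.1 hne) (hwx.trans_eq (hB.symm _ _))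
  have hwx1 : B w x = 1 := le_antisymm (hB.apply_le_one hw.1 hx.1 hwx_ne) hwx
  have hwy1 : B w y = 1 := le_antisymm (hB.apply_le_one hw.1 hy.1 hwy_ne) hwy
  have hxy_compl : x ≠ v - y := by
    rintro rfl
    rw [hB.apply_sub_of_mem_rootNeighbors hw, hwy1] at hwx1
    exact absurd hwx1 (by decide)
  have hxy0 : 0 ≤ B x y := hB.apply_nonneg_of_mem_rootNeighbors hv hx hy hxy_compl
  have hxy1 : B x y ≤ 1 := hB.apply_le_one hx.1 hy.1 hne
  by_contra hxy
  have hxy_zero : B x y = 0 := by omega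
  have hortho {z : M} (hz : z ∈ rootNeighbors B v) (hwz : B w z = 1) : B (v - w) z = 0 := by
    rw [map_sub, LinearMap.sub_apply, hz.2, hwz, sub_self]
  exact h _ <| hB.isOrthoNeighbors_three (hB.sub_mem_rootNeighbors hv hw) hx hy (hortho hx hwx1)
    (hortho hy hwy1) hxy_zero

theorem ncard_rootNeighbors_le_two_mul_finrank [Module.Finite ℤ M] (hB : IsPosDefSymm B)
    (hv : v ∈ latticeRoots B) (h : ∀ f : Fin 3 → M, ¬ IsOrthoNeighbors B v f) :
    (rootNeighbors B v).ncard ≤ 2 * Module.finrank ℤ M := by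
  have hfin := hB.finite_rootNeighbors v
  rcases (rootNeighbors B v).eq_empty_or_nonempty with hempty | ⟨w, hw⟩
  · rw [hempty, Set.ncard_empty]
    exact Nat.zero_le _
  let X : Set M := {x ∈ rootNeighbors B v | 1 ≤ B w x}
  have hXfin : X.Finite := hfin.subset (Set.sep_subset _ _)
  have hX : X.ncard ≤ Module.finrank ℤ M := by
    have := hXfin.fintype
    have hlin : LinearIndependent ℤ ((↑) : X → M) :=
      linearIndependent_of_apply_eq_one (B := B) (fun x ↦ x.2.1.1) fun x y hxy ↦
        hB.apply_eq_one_of_forall_not_isOrthoNeighbors hv h hw x.2.1 y.2.1 x.2.2 y.2.2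
          (Subtype.coe_ne_coe.mpr hxy)
    rw [← Nat.card_coe_set_eq, Nat.card_eq_fintype_card]
    exact hlin.fintype_card_le_finrank
  have hcover : rootNeighbors B v ⊆ X ∪ (v - ·) '' X := by
    intro x hx
    rcases le_or_gt 1 (B w x) with hwx | hwx
    · exact .inl ⟨hx, hwx⟩
    · refine .inr ⟨v - x, ⟨hB.sub_mem_rootNeighbors hv hx, ?_⟩, sub_sub_cancel v x⟩
      rw [hB.apply_sub_of_mem_rootNeighbors hw]
      linarith
  calc (rootNeighbors B v).ncard
      ≤ (X ∪ (v - ·) '' X).ncard := Set.ncard_le_ncard hcover (hXfin.union (hXfin.image _))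
    _ ≤ X.ncard + ((v - ·) '' X).ncard := Set.ncard_union_le _ _
    _ ≤ X.ncard + X.ncard := Nat.add_le_add_left (Set.ncard_image_le hXfin) _
    _ ≤ 2 * Module.finrank ℤ M := by linarith

theorem ncard_rootNeighbors_le [Module.Finite ℤ M] (hB : IsPosDefSymm B)
    (hv : v ∈ latticeRoots B) :
    (rootNeighbors B v).ncard ≤ 56 ∨
      (rootNeighbors B v).ncard + 8 ≤ 4 * Module.finrank ℤ M := by
  by_cases h : ∃ f : Fin 3 → M, IsOrthoNeighbors B v f
  · obtain ⟨f, hf⟩ := h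
    obtain ⟨g, hg⟩ := hB.exists_orthoNeighbors_four hv hf
    exact hB.ncard_rootNeighbors_le_of_isOrthoNeighbors hv hg
  · have := hB.ncard_rootNeighbors_le_two_mul_finrank hv (not_exists.mp h)
    omega

theorem sq_apply_le_of_mem_latticeRoots [DecidableEq M] (hB : IsPosDefSymm B)
    (hv : v ∈ latticeRoots B) {x : M} (hx : x ∈ latticeRoots B) :
    B v x ^ 2 ≤ ((if v = x then 4 else 0) + if B v x = 1 then 1 else 0) +
      ((if v = -x then 4 else 0) + if B v (-x) = 1 then 1 else 0) := by
  have hx' := neg_mem_latticeRoots hx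
  have hle := hB.apply_le_two hv hx
  have hge := hB.apply_le_two hv hx'
  have heq := hB.eq_of_apply_eq_two hv hx
  have heq' := hB.eq_of_apply_eq_two hv hx'
  rw [map_neg] at hge heq' ⊢
  have hcases : B v x = 2 ∨ B v x = 1 ∨ B v x = 0 ∨ B v x = -1 ∨ B v x = -2 := by omega
  rcases hcases with h | h | h | h | h
  · rw [if_pos (heq h), h]
    split_ifs <;> decide
  · rw [h]
    split_ifs <;> first | decide | omega
  · rw [h]
    split_ifs <;> decide
  · rw [h]
    split_ifs <;> first | decide | omega
  · rw [if_pos (heq' (by omega)), h]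
    split_ifs <;> decide

theorem sum_sq_apply_le [Module.Finite ℤ M] (hB : IsPosDefSymm B) (hv : v ∈ latticeRoots B) :
    ∑ x ∈ hB.finite_latticeRoots.toFinset, B v x ^ 2 ≤ 8 + 2 * (rootNeighbors B v).ncard := by
  classical
  set R := hB.finite_latticeRoots.toFinset
  have mem_R {x} : x ∈ R ↔ x ∈ latticeRoots B := Set.Finite.mem_toFinset _
  let g (x : M) : ℤ := (if v = x then 4 else 0) + if B v x = 1 then 1 else 0
  have hneg : ∑ x ∈ R, g (-x) = ∑ x ∈ R, g x :=
    Finset.sum_nbij' (- ·) (- ·) (fun x hx ↦ mem_R.mpr (neg_mem_latticeRoots (mem_R.mp hx)))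
      (fun x hx ↦ mem_R.mpr (neg_mem_latticeRoots (mem_R.mp hx))) (fun x _ ↦ neg_neg x)
      (fun x _ ↦ neg_neg x) fun _ _ ↦ rfl
  have hcard : #{x ∈ R | B v x = 1} = (rootNeighbors B v).ncard := by
    rw [← Set.ncard_coe_finset, Finset.coe_filter]
    simp only [mem_R]
    rfl
  calc ∑ x ∈ R, B v x ^ 2 ≤ ∑ x ∈ R, (g x + g (-x)) :=
        Finset.sum_le_sum fun x hx ↦ hB.sq_apply_le_of_mem_latticeRoots hv (mem_R.mp hx)
    _ = 2 * ∑ x ∈ R, g x := by rw [Finset.sum_add_distrib, hneg, two_mul]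
    _ = 2 * (4 + (rootNeighbors B v).ncard) := by
        rw [Finset.sum_add_distrib, Finset.sum_ite_eq, if_pos (mem_R.mpr hv), Finset.sum_boole,
          hcard]
    _ = 8 + 2 * (rootNeighbors B v).ncard := by ring

theorem two_mul_ncard_latticeRoots_le [Module.Finite ℤ M] (hB : IsPosDefSymm B) {d : ℕ}
    (hd : ∀ v ∈ latticeRoots B, (rootNeighbors B v).ncard ≤ d) :
    2 * (latticeRoots B).ncard ≤ Module.finrank ℤ M * (4 + d) := by
  have hfin := hB.finite_latticeRoots
  have mem_R {x} : x ∈ hfin.toFinset ↔ x ∈ latticeRoots B := hfin.mem_toFinset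
  have hrow (v : hfin.toFinset) : ∑ x : hfin.toFinset, B (v : M) x ^ 2 ≤ 8 + 2 * d := by
    rw [Finset.sum_coe_sort hfin.toFinset fun x ↦ B (v : M) x ^ 2]
    have hv := mem_R.mp v.2
    have := hB.sum_sq_apply_le hv
    have := hd v hv
    omega
  have hnorm : ∑ v : hfin.toFinset, B (v : M) v = 2 * (latticeRoots B).ncard := by
    rw [Finset.sum_congr rfl fun v _ ↦ mem_latticeRoots.mp (mem_R.mp v.2), Finset.sum_const,
      Finset.card_univ, Fintype.card_coe, ← Set.ncard_eq_toFinset_card _ hfin, nsmul_eq_mul,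
      mul_comm]
  have hgram : ∑ v : hfin.toFinset, ∑ x : hfin.toFinset, B (v : M) x ^ 2 ≤
      (latticeRoots B).ncard * (8 + 2 * d) := by
    refine (Finset.sum_le_card_nsmul _ _ _ fun v _ ↦ hrow v).trans_eq ?_
    rw [Finset.card_univ, Fintype.card_coe, ← Set.ncard_eq_toFinset_card _ hfin, nsmul_eq_mul]
  have hframe := hB.sq_sum_apply_self_le ((↑) : hfin.toFinset → M)
  rw [hnorm] at hframe
  have hmul := hframe.trans (mul_le_mul_of_nonneg_left hgram (Nat.cast_nonneg _))
  rcases Nat.eq_zero_or_pos (latticeRoots B).ncard with h0 | hpos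
  · rw [h0, mul_zero]
    exact Nat.zero_le _
  · refine Nat.le_of_mul_le_mul_left (c := 2 * (latticeRoots B).ncard) ?_ (by positivity)
    zify
    linear_combination hmul

theorem ncard_latticeRoots_le [Module.Finite ℤ M] (hB : IsPosDefSymm B) :
    ((latticeRoots B).ncard : ℤ) ≤
      max (480 : ℤ) (2 * (Module.finrank ℤ M : ℤ) * ((Module.finrank ℤ M : ℤ) - 1)) := by
  rcases le_or_gt (Module.finrank ℤ M) 15 with hr | hr
  · have hd : ∀ v ∈ latticeRoots B, (rootNeighbors B v).ncard ≤ 56 := fun v hv ↦ by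
      have := hB.ncard_rootNeighbors_le hv
      omega
    have hcount := hB.two_mul_ncard_latticeRoots_le hd
    refine le_max_of_le_left ?_
    omega
  · have hd : ∀ v ∈ latticeRoots B, (rootNeighbors B v).ncard ≤ 4 * Module.finrank ℤ M - 8 :=
      fun v hv ↦ by
        have := hB.ncard_rootNeighbors_le hv
        omega
    have hcount := hB.two_mul_ncard_latticeRoots_le hd
    refine le_max_of_le_right ?_
    zify [show 8 ≤ 4 * Module.finrank ℤ M by omega] at hcount
    linarith

end IsPosDefSymm

theorem exists_bilinForm_of_two_dvd_polar {M : Type*} [AddCommGroup M] (Q : QuadraticForm ℤ M)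
    (hQ : ∀ x y, 2 ∣ QuadraticMap.polar Q x y) :
    ∃ B : LinearMap.BilinForm ℤ M, (∀ x y, B x y = B y x) ∧ ∀ x, B x x = Q x := by
  choose b hb using hQ
  have inj {m n : ℤ} (h : 2 * m = 2 * n) : m = n := mul_left_cancel₀ two_ne_zero h
  let B : LinearMap.BilinForm ℤ M := LinearMap.mk₂ ℤ b
    (fun x y z ↦ inj <| by
      rw [mul_add, ← hb, ← hb, ← hb, QuadraticMap.polar_add_left])
    (fun a x y ↦ inj <| by
      rw [smul_eq_mul, mul_left_comm, ← hb, ← hb, QuadraticMap.polar_smul_left, smul_eq_mul])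
    (fun x y z ↦ inj <| by
      rw [mul_add, ← hb, ← hb, ← hb, QuadraticMap.polar_add_right])
    (fun a x y ↦ inj <| by
      rw [smul_eq_mul, mul_left_comm, ← hb, ← hb, QuadraticMap.polar_smul_right, smul_eq_mul])
  refine ⟨B, fun x y ↦ inj ?_, fun x ↦ inj ?_⟩
  · exact (hb x y).symm.trans ((QuadraticMap.polar_comm Q x y).trans (hb y x))
  · exact (hb x x).symm.trans ((QuadraticMap.polar_self Q x).trans (nsmul_eq_mul 2 (Q x)))

/-- A classical positive definite quadratic ℤ-lattice of rank `r` has at most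
`max 480 (2r(r-1))` vectors of norm `2`. -/
theorem stmt14 (r : ℕ) (M : Type*) [AddCommGroup M] [Module ℤ M]
    [Module.Free ℤ M] [Module.Finite ℤ M] (hr : Module.finrank ℤ M = r)
    (Q : QuadraticForm ℤ M)
    (hpos : ∀ v : M, v ≠ 0 → 0 < Q v)
    (hclassical : ∀ v w : M, (2 : ℤ) ∣ QuadraticMap.polar Q v w) :
    (Nat.card {v : M // Q v = 2} : ℝ) ≤ max 480 (2 * (r : ℝ) * ((r : ℝ) - 1)) := by
  obtain rfl : ‹Module ℤ M› = AddCommGroup.toIntModule M := Subsingleton.elim _ _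
  obtain ⟨B, hsymm, hself⟩ := exists_bilinForm_of_two_dvd_polar Q hclassical
  have hB : IsPosDefSymm B := ⟨hsymm, fun x hx ↦ (hpos x hx).trans_eq (hself x).symm⟩
  have hcard : Nat.card {v : M // Q v = 2} = (latticeRoots B).ncard := by
    simp only [← hself]
    rfl
  have hbound := hB.ncard_latticeRoots_le
  rw [hr] at hbound
  rw [hcard]
  exact_mod_cast hbound
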